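/- Let k ≥ 4 be an integer and let G be a k-regular 3-connected graph having a vertex cut S of size 3 such that some connected component of G−S is a clique on k vertices. Then the set of proper k-colourings of G forms a single Kempe class. -/

import Mathlib

open SimpleGraph
open scoped Classical

variable {V : Type*}

/-- A proper `k`-colouring of `G`. -/
def IsProperColoring (G : SimpleGraph V) (k : ℕ) (c : V → Fin k) : Prop :=
  ∀ ⦃u v : V⦄, G.Adj u v → c u ≠ c v

/-- `c'` is obtained from `c` by a single Kempe change: the colours `a` and `b` are
swapped on the connected component (of the subgraph induced by the vertices coloured
`a` or `b`) containing `v0`, and all other vertices keep their colour. -/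

def KempeStep (G : SimpleGraph V) (k : ℕ) (c c' : V → Fin k) : Prop :=
  ∃ a b : Fin k, ∃ v0 : {x : V | c x = a ∨ c x = b},
    ∀ v : V, c' v =
      if h : c v = a ∨ c v = b then
        if (G.induce {x : V | c x = a ∨ c x = b}).Reachable v0 ⟨v, h⟩
          then Equiv.swap a b (c v) else c v
      else c v

/-- Two colourings are Kempe equivalent if one is obtained from the other by a finite
sequence of Kempe changes. -/
def KempeEquiv (G : SimpleGraph V) (k : ℕ) (c c' : V → Fin k) : Prop :=
  Relation.ReflTransGen (KempeStep G k) c c'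

/-- The set of all proper `k`-colourings of `G` forms a single Kempe class. -/
def KempeClass (G : SimpleGraph V) (k : ℕ) : Prop :=
  ∀ c c' : V → Fin k, IsProperColoring G k c → IsProperColoring G k c' →
    KempeEquiv G k c c'

/-- `G` is `d`-degenerate: every nonempty set of vertices contains a vertex with at
most `d` neighbours inside the set. -/
def Degenerate (G : SimpleGraph V) (d : ℕ) : Prop :=
  ∀ S : Set V, S.Nonempty → ∃ v ∈ S, (S ∩ G.neighborSet v).ncard ≤ d

/-- `G` is 3-connected: more than 3 vertices, and deleting any at most 2 vertices
leaves it connected. -/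
def ThreeConnected [Fintype V] (G : SimpleGraph V) : Prop :=
  3 < Fintype.card V ∧ ∀ S : Set V, S.ncard ≤ 2 → (G.induce Sᶜ).Connected

/-!
Let `t y ∈ S` be the only neighbour outside `C` of a vertex `y ∈ C`. In a proper `k`-colouring all
`k` colours occur on the clique `C`, so the colour of `t w` is repeated on some `y ∈ C`, and `w` is
adjacent to both `t w` and `y`. The colourings with equal colours at `t w` and `y` are those of the
graph obtained by identifying these two vertices, where `w` has degree at most `k - 1`. By
3-connectedness this graph is `(k - 1)`-degenerate, so by the Las Vergnas–Meyniel theorem these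
colourings are Kempe equivalent to each other.

Two vertices `y, z` of `C` can exchange their colours by a Kempe change unless one of these colours
is also that of `t z` or `t y` respectively. Since `C` has `k > 3` vertices, some `y ≠ z` in `C`
satisfy `t y = t z`, and this leaves enough room to move any two colourings, by exchanges in `C`, to
colourings which repeat the colour of the same vertex of `S` on the same vertex of `C`.
-/

section KempeSwap

open scoped symmDiff

variable {G : SimpleGraph V} {k : ℕ} {c : V → Fin k} {a b : Fin k} {K L : Set V}

/-- The set of vertices coloured `a` or `b`, the support of the Kempe changes with these colours. -/
abbrev bicolored (c : V → Fin k) (a b : Fin k) : Set V :=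
  {x | c x = a ∨ c x = b}

/-- The recolouring of `c` that swaps the colours `a` and `b` on `K`. -/
noncomputable def kempeSwap (a b : Fin k) (K : Set V) (c : V → Fin k) : V → Fin k :=
  K.piecewise (Equiv.swap a b ∘ c) c

/-- `K` is a union of connected components of the subgraph induced by the colours `a` and `b`.
Vertices of other colours may belong to `K`: swapping `a` and `b` on `K` does not affect them. -/
def KempeClosed (G : SimpleGraph V) (c : V → Fin k) (a b : Fin k) (K : Set V) : Prop :=
  ∀ ⦃x y : V⦄, x ∈ bicolored c a b → y ∈ bicolored c a b → G.Adj x y → (x ∈ K ↔ y ∈ K)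

/-- The connected component of `v` in the subgraph induced by the colours `a` and `b`. -/
def kempeChain (G : SimpleGraph V) (c : V → Fin k) (a b : Fin k) (v : bicolored c a b) : Set V :=
  (↑) '' {w | (G.induce (bicolored c a b)).Reachable v w}

lemma mem_bicolored {x : V} : x ∈ bicolored c a b ↔ c x = a ∨ c x = b :=
  Iff.rfl

lemma kempeSwap_of_mem {x : V} (hx : x ∈ K) : kempeSwap a b K c x = Equiv.swap a b (c x) :=
  Set.piecewise_eq_of_mem _ _ _ hx

lemma kempeSwap_of_notMem {x : V} (hx : x ∉ K) : kempeSwap a b K c x = c x :=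
  Set.piecewise_eq_of_notMem _ _ _ hx

lemma kempeSwap_of_notMem_bicolored {x : V} (hx : x ∉ bicolored c a b) :
    kempeSwap a b K c x = c x := by
  obtain ⟨hxa, hxb⟩ := not_or.1 hx
  by_cases hxK : x ∈ K
  · rw [kempeSwap_of_mem hxK, Equiv.swap_apply_of_ne_of_ne hxa hxb]
  · exact kempeSwap_of_notMem hxK

lemma bicolored_kempeSwap : bicolored (kempeSwap a b K c) a b = bicolored c a b := by
  ext x
  by_cases hx : x ∈ K
  · simp only [mem_bicolored, kempeSwap_of_mem hx, Equiv.swap_apply_eq_iff,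
      Equiv.swap_apply_left, Equiv.swap_apply_right, or_comm]
  · simp only [mem_bicolored, kempeSwap_of_notMem hx]

lemma kempeSwap_kempeSwap :
    kempeSwap a b K (kempeSwap a b L c) = kempeSwap a b (K ∆ L) c := by
  ext x
  by_cases hK : x ∈ K <;> by_cases hL : x ∈ L <;>
    simp [kempeSwap, Set.piecewise, Set.mem_symmDiff, hK, hL]

lemma kempeSwap_kempeSwap_self : kempeSwap a b K (kempeSwap a b K c) = c := by
  rw [kempeSwap_kempeSwap, symmDiff_self, kempeSwap, Set.bot_eq_empty, Set.piecewise_empty]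

lemma kempeSwap_comp {W : Type*} (f : W → V) :
    kempeSwap a b K c ∘ f = kempeSwap a b (f ⁻¹' K) (c ∘ f) :=
  rfl

lemma kempeClosed_of_forall_mem
    (h : ∀ x ∈ K, ∀ y ∈ bicolored c a b, x ∈ bicolored c a b → G.Adj x y → y ∈ K) :
    KempeClosed G c a b K :=
  fun _ _ hx hy hxy => ⟨fun hxK => h _ hxK _ hy hx hxy, fun hyK => h _ hyK _ hx hy hxy.symm⟩

lemma kempeClosed_kempeSwap_iff :
    KempeClosed G (kempeSwap a b L c) a b K ↔ KempeClosed G c a b K := by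
  rw [KempeClosed, bicolored_kempeSwap, KempeClosed]

lemma KempeClosed.symmDiff (hK : KempeClosed G c a b K) (hL : KempeClosed G c a b L) :
    KempeClosed G c a b (K ∆ L) := by
  intro x y hx hy hxy
  rw [Set.mem_symmDiff, Set.mem_symmDiff, hK hx hy hxy, hL hx hy hxy]

lemma KempeClosed.preimage {W : Type*} {H : SimpleGraph W} (f : H →g G)
    (hK : KempeClosed G c a b K) : KempeClosed H (c ∘ f) a b (f ⁻¹' K) :=
  fun _ _ hx hy hxy => hK hx hy (f.map_adj hxy)

lemma KempeClosed.mem_of_reachable (hK : KempeClosed G c a b K) {x y : bicolored c a b}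
    (hxy : (G.induce (bicolored c a b)).Reachable x y) (hx : (x : V) ∈ K) : (y : V) ∈ K := by
  obtain ⟨p⟩ := hxy
  induction p with
  | nil => exact hx
  | @cons u v _ huv _ ih => exact ih ((hK u.2 v.2 huv).1 hx)

lemma kempeClosed_kempeChain (v : bicolored c a b) :
    KempeClosed G c a b (kempeChain G c a b v) := by
  refine kempeClosed_of_forall_mem ?_
  rintro _ ⟨x, hx, rfl⟩ y hy - hxy
  have hadj : (G.induce (bicolored c a b)).Adj x ⟨y, hy⟩ := hxy
  exact ⟨⟨y, hy⟩, hx.trans hadj.reachable, rfl⟩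

lemma KempeClosed.kempeChain_subset (hK : KempeClosed G c a b K) {v : bicolored c a b}
    (hv : (v : V) ∈ K) : kempeChain G c a b v ⊆ K := by
  rintro _ ⟨x, hx, rfl⟩
  exact hK.mem_of_reachable hx hv

lemma kempeStep_iff {c' : V → Fin k} :
    KempeStep G k c c' ↔
      ∃ a b, ∃ v : bicolored c a b, c' = kempeSwap a b (kempeChain G c a b v) c := by
  refine exists₃_congr fun a b v => funext_iff.symm.trans <| Eq.congr_right <| funext fun x => ?_
  by_cases hx : x ∈ bicolored c a b
  · have hmem : x ∈ kempeChain G c a b v ↔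
        (G.induce (bicolored c a b)).Reachable v ⟨x, hx⟩ := by
      simp [kempeChain, mem_bicolored.1 hx]
    simp only [dif_pos (mem_bicolored.1 hx), kempeSwap, Set.piecewise, hmem, Function.comp_apply]
  · rw [kempeSwap_of_notMem_bicolored hx, dif_neg (mt mem_bicolored.2 hx)]

/-- A swap on a union of components is a composition of swaps on the single components. -/
theorem KempeClosed.kempeEquiv [Finite V] (hK : KempeClosed G c a b K) :
    KempeEquiv G k c (kempeSwap a b K c) := by
  induction h : (K ∩ bicolored c a b).ncard using Nat.strong_induction_on generalizing K c with
  | _ n ih =>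
  obtain hempty | ⟨v, hvK, hv⟩ := (K ∩ bicolored c a b).eq_empty_or_nonempty
  · have heq : kempeSwap a b K c = c := by
      funext x
      by_cases hx : x ∈ K
      · exact kempeSwap_of_notMem_bicolored fun hxab => hempty.subset ⟨hx, hxab⟩
      · exact kempeSwap_of_notMem hx
    rw [heq]
    exact .refl
  · set R := kempeChain G c a b ⟨v, hv⟩
    have hvR : v ∈ R := ⟨⟨v, hv⟩, .refl _, rfl⟩
    have hRK : R ⊆ K := hK.kempeChain_subset hvK
    have hlt : (K ∆ R ∩ bicolored (kempeSwap a b R c) a b).ncard < n := by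
      rw [bicolored_kempeSwap, ← h, symmDiff_of_ge hRK]
      exact Set.ncard_lt_ncard ⟨Set.inter_subset_inter_left _ Set.sdiff_subset,
        fun hsub => (hsub ⟨hvK, hv⟩).1.2 hvR⟩
    have hrest := ih _ hlt
      (kempeClosed_kempeSwap_iff.2 (hK.symmDiff (kempeClosed_kempeChain _))) rfl
    rw [kempeSwap_kempeSwap, symmDiff_symmDiff_cancel_right] at hrest
    exact .head (kempeStep_iff.2 ⟨a, b, ⟨v, hv⟩, rfl⟩) hrest

lemma KempeStep.exists_kempeClosed {c' : V → Fin k} (h : KempeStep G k c c') :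
    ∃ a b K, KempeClosed G c a b K ∧ c' = kempeSwap a b K c := by
  obtain ⟨a, b, v, rfl⟩ := kempeStep_iff.1 h
  exact ⟨a, b, _, kempeClosed_kempeChain v, rfl⟩

lemma isProperColoring_kempeSwap (hc : IsProperColoring G k c) (hK : KempeClosed G c a b K) :
    IsProperColoring G k (kempeSwap a b K c) := by
  have hcross : ∀ ⦃x y⦄, G.Adj x y → x ∈ K → y ∉ K → Equiv.swap a b (c x) ≠ c y := by
    intro x y hxy hx hy heq
    by_cases hxab : x ∈ bicolored c a b
    · have hyab : y ∈ bicolored (kempeSwap a b K c) a b := by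
        rw [← bicolored_kempeSwap (K := K)] at hxab
        rwa [mem_bicolored, kempeSwap_of_notMem hy, ← heq, ← kempeSwap_of_mem hx]
      rw [bicolored_kempeSwap] at hyab
      exact hy ((hK hxab hyab hxy).1 hx)
    · rw [← kempeSwap_of_mem hx, kempeSwap_of_notMem_bicolored hxab] at heq
      exact hc hxy heq
  intro x y hxy
  by_cases hx : x ∈ K <;> by_cases hy : y ∈ K <;>
    simp only [kempeSwap_of_mem, kempeSwap_of_notMem, hx, hy, not_false_eq_true]
  · exact (Equiv.swap a b).injective.ne (hc hxy)
  · exact hcross hxy hx hy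
  · exact (hcross hxy.symm hy hx).symm
  · exact hc hxy

end KempeSwap

section KempeEquiv

variable {G : SimpleGraph V} {k : ℕ} {c c' : V → Fin k}

lemma IsProperColoring.of_kempeEquiv (hc : IsProperColoring G k c) (h : KempeEquiv G k c c') :
    IsProperColoring G k c' := by
  induction h with
  | refl => exact hc
  | tail _ hstep ih =>
    obtain ⟨a, b, K, hK, rfl⟩ := hstep.exists_kempeClosed
    exact isProperColoring_kempeSwap ih hK

lemma KempeEquiv.symm [Finite V] (h : KempeEquiv G k c c') : KempeEquiv G k c' c := by
  induction h with
  | refl => exact .refl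
  | @tail d _ _ hstep ih =>
    obtain ⟨a, b, K, hK, rfl⟩ := hstep.exists_kempeClosed
    have hback := (kempeClosed_kempeSwap_iff (L := K).2 hK).kempeEquiv
    rw [kempeSwap_kempeSwap_self] at hback
    exact Relation.ReflTransGen.trans hback ih

lemma KempeEquiv.comp_hom {W : Type*} [Finite W] {H : SimpleGraph W} (f : H →g G)
    (h : KempeEquiv G k c c') : KempeEquiv H k (c ∘ f) (c' ∘ f) := by
  induction h with
  | refl => exact .refl
  | tail _ hstep ih =>
    obtain ⟨a, b, K, hK, rfl⟩ := hstep.exists_kempeClosed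
    exact Relation.ReflTransGen.trans ih (hK.preimage f).kempeEquiv

lemma IsProperColoring.update {v : V} {f : Fin k} (hc : IsProperColoring G k c)
    (hf : ∀ y, G.Adj v y → c y ≠ f) : IsProperColoring G k (Function.update c v f) := by
  intro x y hxy
  by_cases hx : x = v
  · subst hx
    simpa [hxy.ne'] using (hf y hxy).symm
  by_cases hy : y = v
  · subst hy
    simpa [hx] using hf x hxy.symm
  · simpa [hx, hy] using hc hxy

lemma IsProperColoring.kempeEquiv_of_eqOn_compl_singleton [Finite V] {v : V}
    (hc : IsProperColoring G k c) (hc' : IsProperColoring G k c') (h : Set.EqOn c c' {v}ᶜ) :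
    KempeEquiv G k c c' := by
  have hswap : c' = kempeSwap (c v) (c' v) {v} c := by
    funext x
    by_cases hx : x = v
    · subst hx
      rw [kempeSwap_of_mem (Set.mem_singleton x), Equiv.swap_apply_left]
    · rw [kempeSwap_of_notMem (Set.notMem_singleton_iff.2 hx), h hx]
  rw [hswap]
  refine (kempeClosed_of_forall_mem ?_).kempeEquiv
  rintro _ rfl y hy - hvy
  obtain hy | hy := hy
  · exact absurd hy.symm (hc hvy)
  · rw [h hvy.ne'] at hy
    exact absurd hy.symm (hc' hvy)

end KempeEquiv

lemma ncard_image_lt_of_not_injOn {α β : Type*} {f : α → β} {s : Set α} (hs : s.Finite)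
    (hf : ¬ Set.InjOn f s) : (f '' s).ncard < s.ncard :=
  (Set.ncard_image_le hs).lt_of_ne (mt (Set.ncard_image_iff hs).1 hf)

section Degenerate

variable [Finite V] {G : SimpleGraph V} {k d : ℕ} {c : V → Fin k} {a b : Fin k} {v : V}

lemma exists_color_ne_of_not_injOn (hdeg : (G.neighborSet v).ncard < k)
    (hinj : ¬ Set.InjOn c (G.neighborSet v)) : ∃ f, f ≠ c v ∧ ∀ y, G.Adj v y → c y ≠ f := by
  have himage := ncard_image_lt_of_not_injOn (Set.toFinite _) hinj
  have hcard : (insert (c v) (c '' G.neighborSet v)).ncard < k :=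
    (Set.ncard_insert_le _ _).trans_lt (by lia)
  have hne : insert (c v) (c '' G.neighborSet v) ≠ Set.univ := by
    intro huniv
    rw [huniv, Set.ncard_univ, Nat.card_fin] at hcard
    exact hcard.false
  obtain ⟨f, hf⟩ := (Set.ne_univ_iff_exists_notMem _).1 hne
  rw [Set.mem_insert_iff, not_or] at hf
  exact ⟨f, hf.1, fun y hy heq => hf.2 ⟨y, hy, heq⟩⟩

lemma KempeClosed.exists_kempeEquiv_extension_of_iff {L : Set ({v}ᶜ : Set V)}
    (hL : KempeClosed (G.induce {v}ᶜ) (c ∘ (↑)) a b L) (p : Prop)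
    (hp : v ∈ bicolored c a b →
      ∀ y : ({v}ᶜ : Set V), ↑y ∈ bicolored c a b → G.Adj v y → (y ∈ L ↔ p)) :
    ∃ d, KempeEquiv G k c d ∧ d ∘ (↑) = kempeSwap a b L (c ∘ (↑)) := by
  set K : Set V := (↑) '' L ∪ {x | x = v ∧ p} with hKdef
  have hvK : v ∈ K ↔ p := by simp [hKdef]
  have hmem : ∀ y : ({v}ᶜ : Set V), ↑y ∈ K ↔ y ∈ L := by
    rintro ⟨y, hy⟩
    have hyv : y ≠ v := hy
    simp [hKdef, hyv]
  have hK : KempeClosed G c a b K := by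
    intro x y hx hy hxy
    by_cases hxv : x = v
    · subst hxv
      rw [hvK, hmem ⟨y, hxy.ne'⟩, hp hx ⟨y, hxy.ne'⟩ hy hxy]
    by_cases hyv : y = v
    · subst hyv
      rw [hvK, hmem ⟨x, hxv⟩, hp hy ⟨x, hxv⟩ hx hxy.symm]
    · rw [hmem ⟨x, hxv⟩, hmem ⟨y, hyv⟩]
      exact hL hx hy hxy
  refine ⟨_, hK.kempeEquiv, ?_⟩
  rw [kempeSwap_comp, show (↑) ⁻¹' K = L from Set.ext hmem]

/-- If the swap does not extend to `v` directly, then two neighbours of `v` have the same colour,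
so `v` can first be recoloured with a third colour. -/
lemma KempeClosed.exists_kempeEquiv_extension {L : Set ({v}ᶜ : Set V)}
    (hdeg : (G.neighborSet v).ncard < k) (hc : IsProperColoring G k c)
    (hL : KempeClosed (G.induce {v}ᶜ) (c ∘ (↑)) a b L) :
    ∃ d, KempeEquiv G k c d ∧ d ∘ (↑) = kempeSwap a b L (c ∘ (↑)) := by
  by_cases hp : ∃ p : Prop, v ∈ bicolored c a b →
      ∀ y : ({v}ᶜ : Set V), ↑y ∈ bicolored c a b → G.Adj v y → (y ∈ L ↔ p)
  · exact hp.elim hL.exists_kempeEquiv_extension_of_iff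
  push Not at hp
  obtain ⟨hvab, y, hyab, hvy, hyL⟩ := hp True
  obtain ⟨-, z, hzab, hvz, hzL⟩ := hp False
  simp only [not_true_eq_false, not_false_eq_true, and_false, and_true, false_or, or_false]
    at hyL hzL
  have hyz : c y = c z := by grind [hc hvy, hc hvz]
  have hinj : ¬ Set.InjOn c (G.neighborSet v) := fun hinj =>
    hyL (Subtype.ext (hinj hvy hvz hyz) ▸ hzL)
  obtain ⟨f, hfv, hf⟩ := exists_color_ne_of_not_injOn hdeg hinj
  have hfab : v ∉ bicolored (Function.update c v f) a b := by
    rw [mem_bicolored, Function.update_self]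
    grind [hc hvy, hf y hvy]
  have hupdate : IsProperColoring G k (Function.update c v f) := hc.update hf
  have hoff : Set.EqOn c (Function.update c v f) {v}ᶜ := fun x hx =>
    (Function.update_of_ne hx _ _).symm
  have hrestrict : c ∘ (↑) = Function.update c v f ∘ ((↑) : ({v}ᶜ : Set V) → V) :=
    funext fun x => hoff x.2
  rw [hrestrict] at hL ⊢
  obtain ⟨d, hd, heq⟩ := hL.exists_kempeEquiv_extension_of_iff True
    fun hv => absurd hv hfab
  exact ⟨d, (hc.kempeEquiv_of_eqOn_compl_singleton hupdate hoff).trans hd, heq⟩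

lemma KempeEquiv.exists_extension {d : ({v}ᶜ : Set V) → Fin k}
    (hdeg : (G.neighborSet v).ncard < k) (hc : IsProperColoring G k c)
    (h : KempeEquiv (G.induce {v}ᶜ) k (c ∘ (↑)) d) :
    ∃ d', KempeEquiv G k c d' ∧ d' ∘ (↑) = d := by
  induction h with
  | refl => exact ⟨c, .refl, rfl⟩
  | tail _ hstep ih =>
    obtain ⟨d', hcd', rfl⟩ := ih
    obtain ⟨a, b, L, hL, rfl⟩ := hstep.exists_kempeClosed
    obtain ⟨d'', hd'd'', heq⟩ := hL.exists_kempeEquiv_extension hdeg (hc.of_kempeEquiv hcd')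
    exact ⟨d'', Relation.ReflTransGen.trans hcd' hd'd'', heq⟩

theorem kempeClass_of_induce_compl_singleton (hdeg : (G.neighborSet v).ncard < k)
    (h : KempeClass (G.induce {v}ᶜ) k) : KempeClass G k := by
  intro c c' hc hc'
  have hrestrict : KempeEquiv (G.induce {v}ᶜ) k (c ∘ (↑)) (c' ∘ (↑)) :=
    h _ _ (fun _ _ hxy => hc hxy) (fun _ _ hxy => hc' hxy)
  obtain ⟨d, hcd, heq⟩ := hrestrict.exists_extension hdeg hc
  have hd : Set.EqOn d c' {v}ᶜ := fun x hx => congrFun heq ⟨x, hx⟩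
  exact hcd.trans ((hc.of_kempeEquiv hcd).kempeEquiv_of_eqOn_compl_singleton hc' hd)

lemma Degenerate.induce (hG : Degenerate G d) (s : Set V) : Degenerate (G.induce s) d := by
  intro T hT
  obtain ⟨_, ⟨x, hx, rfl⟩, hcard⟩ := hG ((↑) '' T) (hT.image _)
  refine ⟨x, hx, le_trans ?_ hcard⟩
  rw [← Set.ncard_image_of_injective _ Subtype.val_injective]
  refine Set.ncard_le_ncard ?_
  rintro _ ⟨y, ⟨hy, hxy⟩, rfl⟩
  exact ⟨⟨y, hy, rfl⟩, hxy⟩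

/-- The Las Vergnas–Meyniel theorem. -/
theorem Degenerate.kempeClass (hG : Degenerate G d) (hdk : d < k) : KempeClass G k := by
  induction h : Nat.card V generalizing V with
  | zero =>
    intro c c' _ _
    have : IsEmpty V := (Nat.card_eq_zero.1 h).resolve_right (not_infinite_iff_finite.2 ‹_›)
    rw [Subsingleton.elim c c']
    exact .refl
  | succ n ih =>
    have : Nonempty V := (Nat.card_pos_iff.1 (h ▸ n.succ_pos)).1
    obtain ⟨v, -, hv⟩ := hG Set.univ Set.univ_nonempty
    rw [Set.univ_inter] at hv
    refine kempeClass_of_induce_compl_singleton (hv.trans_lt hdk) (ih (hG.induce _) ?_)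
    have := Set.ncard_add_ncard_compl {v}
    rw [Set.ncard_singleton] at this
    rw [Nat.card_coe_set_eq]
    lia

end Degenerate

section Identification

variable {G : SimpleGraph V} {k d : ℕ} {c c' : V → Fin k} {u v w : V}

lemma exists_adj_of_preconnected_induce {W T : Set V} (hW : (G.induce W).Preconnected) {p q : V}
    (hp : p ∈ W ∩ T) (hq : q ∈ W \ T) : ∃ x ∈ W ∩ T, ∃ y ∈ W \ T, G.Adj x y := by
  obtain ⟨walk⟩ := hW ⟨p, hp.1⟩ ⟨q, hq.1⟩
  obtain ⟨e, -, hfst, hsnd⟩ := walk.exists_boundary_dart (Subtype.val ⁻¹' T) hp.2 hq.2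
  exact ⟨e.fst, ⟨e.fst.2, hfst⟩, e.snd, ⟨e.snd.2, hsnd⟩, e.adj⟩

/-- Remove the vertices outside `R` first, in order of decreasing distance from `w`: each of them
still has a neighbour left when it is removed. -/
lemma degenerate_of_preconnected_induce_compl [Finite V] {R : Set V} (hR : G.IsIndepSet R)
    (hconn : (G.induce Rᶜ).Preconnected) (hdeg : ∀ x ∉ R, (G.neighborSet x).ncard ≤ d + 1)
    (hwR : w ∉ R) (hw : (G.neighborSet w).ncard ≤ d) : Degenerate G d := by
  intro T hT
  by_cases hwT : w ∈ T
  · exact ⟨w, hwT, (Set.ncard_le_ncard Set.inter_subset_right).trans hw⟩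
  by_cases hTR : T ⊆ R
  · obtain ⟨x, hx⟩ := hT
    have hempty : T ∩ G.neighborSet x = ∅ := Set.eq_empty_of_forall_notMem fun y ⟨hy, hxy⟩ =>
      hR (hTR hx) (hTR hy) hxy.ne hxy
    exact ⟨x, hx, by simp [hempty]⟩
  · obtain ⟨p, hpT, hpR⟩ := Set.not_subset.1 hTR
    obtain ⟨x, ⟨hxR, hxT⟩, y, ⟨-, hyT⟩, hxy⟩ :=
      exists_adj_of_preconnected_induce hconn ⟨hpR, hpT⟩ ⟨hwR, hwT⟩
    have hlt : (T ∩ G.neighborSet x).ncard < (G.neighborSet x).ncard :=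
      Set.ncard_lt_ncard ⟨Set.inter_subset_right, fun hsub => hyT (hsub hxy).1⟩
    exact ⟨x, hxT, Nat.le_of_lt_succ (hlt.trans_le (hdeg x hxR))⟩

lemma neighborSet_map_update_subset {x : V} (hx : x ≠ u) :
    (G.map (Function.update id v u)).neighborSet x ⊆
      Function.update id v u '' G.neighborSet x := by
  rintro _ ⟨-, x', y, hxy, hx', rfl⟩
  have hx'v : x' ≠ v := by
    rintro rfl
    exact hx (by simpa using hx'.symm)
  rw [Function.update_of_ne hx'v, id] at hx'
  exact ⟨y, hx' ▸ hxy, rfl⟩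

lemma degenerate_map_update [Finite V] (huv : u ≠ v)
    (hconn : (G.induce {u, v}ᶜ).Preconnected)
    (hdeg : ∀ x ∉ ({u, v} : Set V), (G.neighborSet x).ncard ≤ d + 1)
    (hwu : G.Adj w u) (hwv : G.Adj w v) :
    Degenerate (G.map (Function.update id v u)) d := by
  set π : V → V := Function.update id v u with hπ
  have hπ_ne : ∀ x, π x ≠ v := by
    intro x
    by_cases hx : x = v <;> simp [hπ, hx, huv]
  have hπ_fix : ∀ x ∉ ({u, v} : Set V), π x = x := fun x hx =>
    Function.update_of_ne (fun h => hx (Or.inr h)) _ _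
  have hindep : (G.map π).IsIndepSet {u, v} := by
    rw [isIndepSet_iff, Set.pairwise_pair]
    exact fun _ => ⟨fun ⟨_, _, y, _, _, hy⟩ => hπ_ne y hy, fun ⟨_, x, _, _, hx, _⟩ => hπ_ne x hx⟩
  have hle : G.induce {u, v}ᶜ ≤ (G.map π).induce {u, v}ᶜ := fun x y hxy =>
    ⟨fun h => hxy.ne (Subtype.ext h), x, y, hxy, hπ_fix x x.2, hπ_fix y y.2⟩
  have hwR : w ∉ ({u, v} : Set V) := not_or.2 ⟨hwu.ne, hwv.ne⟩
  refine degenerate_of_preconnected_induce_compl hindep (hconn.mono hle) (fun x hx => ?_) hwR ?_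
  · exact (Set.ncard_le_ncard (neighborSet_map_update_subset fun h => hx (Or.inl h))).trans
      ((Set.ncard_image_le (Set.toFinite _)).trans (hdeg x hx))
  · have hnotinj : ¬ Set.InjOn π (G.neighborSet w) := fun hinj =>
      huv (hinj hwu hwv (by simp [hπ, huv]))
    exact Nat.le_of_lt_succ <| (Set.ncard_le_ncard (neighborSet_map_update_subset hwu.ne)).trans_lt
      ((ncard_image_lt_of_not_injOn (Set.toFinite _) hnotinj).trans_le (hdeg w hwR))

/-- The colourings in question are those of the graph obtained by identifying `u` and `v`. -/
theorem kempeEquiv_of_eq_of_eq [Finite V] (huv : u ≠ v)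
    (hconn : (G.induce {u, v}ᶜ).Preconnected)
    (hdeg : ∀ x ∉ ({u, v} : Set V), (G.neighborSet x).ncard ≤ k)
    (hwu : G.Adj w u) (hwv : G.Adj w v)
    (hc : IsProperColoring G k c) (hc' : IsProperColoring G k c')
    (h : c u = c v) (h' : c' u = c' v) : KempeEquiv G k c c' := by
  set π : V → V := Function.update id v u with hπ
  have hcomp : ∀ e : V → Fin k, e u = e v → e ∘ π = e := by
    intro e he
    rw [hπ, Function.comp_update, he, Function.comp_id, Function.update_eq_self]
  have hproper : ∀ e : V → Fin k, e u = e v → IsProperColoring G k e →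
      IsProperColoring (G.map π) k e := by
    rintro e he hpe _ _ ⟨-, x, y, hxy, rfl, rfl⟩
    have hx : e (π x) = e x := congrFun (hcomp e he) x
    have hy : e (π y) = e y := congrFun (hcomp e he) y
    rw [hx, hy]
    exact hpe hxy
  have hne : ∀ {x y : V}, G.Adj x y → π x ≠ π y := by
    intro x y hxy heq
    have hcxy : (c ∘ π) x = (c ∘ π) y := congrArg c heq
    rw [hcomp c h] at hcxy
    exact hc hxy hcxy
  let f : G →g G.map π := ⟨π, fun hxy => map_adj_apply' hxy (hne hxy)⟩
  obtain ⟨d, rfl⟩ : ∃ d, k = d + 1 := Nat.exists_eq_succ_of_ne_zero (c u).pos.ne'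
  have hmap : KempeEquiv (G.map π) (d + 1) c c' :=
    (degenerate_map_update huv hconn hdeg hwu hwv).kempeClass d.lt_succ_self c c'
      (hproper c h hc) (hproper c' h' hc')
  have hlift : KempeEquiv G (d + 1) (c ∘ π) (c' ∘ π) := hmap.comp_hom f
  rwa [hcomp c h, hcomp c' h'] at hlift

end Identification

lemma exists_ne_of_ncard_image_eq_three {α β : Type*} {f : α → β} {s : Set α}
    (hf : (f '' s).ncard = 3) (hs : 3 < s.ncard) :
    ∃ y ∈ s, ∃ z ∈ s, y ≠ z ∧ f y = f z ∧
      ∃ p ∈ s, ∃ q ∈ s, ∀ x ∈ s, f x = f y ∨ f x = f p ∨ f x = f q := by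
  obtain ⟨y, hy, z, hz, hne, hyz⟩ := Set.exists_ne_map_eq_of_ncard_lt_of_maps_to
    (hf.trans_lt hs) (Set.mapsTo_image f s) (Set.finite_of_ncard_ne_zero (by lia))
  have hrest := Set.ncard_sdiff_singleton_of_mem (Set.mem_image_of_mem f hy)
  rw [hf] at hrest
  obtain ⟨_, _, -, hpair⟩ := Set.ncard_eq_two.1 hrest
  obtain ⟨⟨p, hp, rfl⟩, -⟩ := hpair.superset (Set.mem_insert _ _)
  obtain ⟨⟨q, hq, rfl⟩, -⟩ := hpair.superset (Set.mem_insert_of_mem _ rfl)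
  exact ⟨y, hy, z, hz, hne, hyz, p, hp, q, hq, fun x hx =>
    or_iff_not_imp_left.2 fun h => hpair.subset ⟨⟨x, hx, rfl⟩, h⟩⟩

section AttachedClique

variable {G : SimpleGraph V} {k : ℕ} {C S : Set V} {t : V → V} {c c' : V → Fin k}
  {i j w y z : V}

/-- `C` is a clique on `k` vertices, each vertex `y` of which has exactly one neighbour outside `C`,
namely `t y`. The values of `t` outside `C` are irrelevant. -/
structure IsAttachedClique (G : SimpleGraph V) (k : ℕ) (C : Set V) (t : V → V) : Prop where
  isClique : G.IsClique C
  ncard_eq : C.ncard = k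
  neighborSet_sdiff : ∀ y ∈ C, G.neighborSet y \ C = {t y}

/-- Some colouring Kempe equivalent to `c` repeats the colour of `i` on a vertex of `C` whose
neighbour outside `C` is `j`. -/
def KempeRepeats (G : SimpleGraph V) (C : Set V) (t : V → V) (c : V → Fin k) (i j : V) : Prop :=
  ∃ d, KempeEquiv G k c d ∧ ∃ y ∈ C, t y = j ∧ d y = d i

theorem exists_isAttachedClique [Finite V] (hclique : G.IsClique C) (hcard : C.ncard = k)
    (hdeg : ∀ y ∈ C, (G.neighborSet y).ncard = k) : ∃ t, IsAttachedClique G k C t := by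
  have hone : ∀ y ∈ C, (G.neighborSet y \ C).ncard = 1 := by
    intro y hy
    have hinter : G.neighborSet y ∩ C = C \ {y} := by
      ext x
      exact ⟨fun ⟨hyx, hx⟩ => ⟨hx, hyx.ne'⟩, fun ⟨hx, hxy⟩ => ⟨hclique hy hx (Ne.symm hxy), hx⟩⟩
    have hsplit := Set.ncard_inter_add_ncard_sdiff_eq_ncard (G.neighborSet y) C
    have herase := Set.ncard_sdiff_singleton_add_one hy
    rw [hinter, hdeg y hy] at hsplit
    lia
  have hexists : ∀ y, ∃ s, y ∈ C → G.neighborSet y \ C = {s} := fun y => by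
    by_cases hy : y ∈ C
    · exact (Set.ncard_eq_one.1 (hone y hy)).imp fun s hs _ => hs
    · exact ⟨y, fun h => absurd h hy⟩
  choose t ht using hexists
  exact ⟨t, hclique, hcard, ht⟩

namespace IsAttachedClique

lemma adj (hC : IsAttachedClique G k C t) (hy : y ∈ C) : G.Adj y (t y) :=
  ((hC.neighborSet_sdiff y hy).superset rfl).1

lemma notMem (hC : IsAttachedClique G k C t) (hy : y ∈ C) : t y ∉ C :=
  ((hC.neighborSet_sdiff y hy).superset rfl).2

lemma eq_of_adj (hC : IsAttachedClique G k C t) (hy : y ∈ C) (hz : z ∉ C) (hyz : G.Adj y z) :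
    z = t y :=
  (hC.neighborSet_sdiff y hy).subset ⟨hyz, hz⟩

/-- Otherwise `S \ {s}` would separate `C` from `s`. -/
lemma image_eq (hC : IsAttachedClique G k C t) (hne : C.Nonempty) (hCS : Disjoint C S)
    (htS : ∀ y ∈ C, t y ∈ S) (hconn : ∀ s ∈ S, (G.induce (S \ {s})ᶜ).Preconnected) :
    t '' C = S := by
  refine Set.Subset.antisymm (Set.image_subset_iff.2 htS) fun s hs => ?_
  obtain ⟨p, hp⟩ := hne
  have hpS : p ∈ (S \ {s})ᶜ := fun h => hCS.notMem_of_mem_left hp h.1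
  have hsS : s ∈ (S \ {s})ᶜ := fun h => h.2 rfl
  obtain ⟨x, ⟨-, hx⟩, y, ⟨hyS, hy⟩, hxy⟩ := exists_adj_of_preconnected_induce (hconn s hs)
    ⟨hpS, hp⟩ ⟨hsS, hCS.notMem_of_mem_right hs⟩
  obtain rfl := hC.eq_of_adj hx hy hxy
  exact ⟨x, hx, by_contra fun hys => hyS ⟨htS x hx, hys⟩⟩

lemma injOn (hC : IsAttachedClique G k C t) (hc : IsProperColoring G k c) : Set.InjOn c C :=
  fun _ hx _ hy heq => by_contra fun hxy => hc (hC.isClique hx hy hxy) heq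

lemma exists_color_eq (hC : IsAttachedClique G k C t) (hc : IsProperColoring G k c) (f : Fin k) :
    ∃ w ∈ C, c w = f := by
  have hcard : (c '' C).ncard = (Set.univ : Set (Fin k)).ncard := by
    rw [(hC.injOn hc).ncard_image, hC.ncard_eq, Set.ncard_univ, Nat.card_fin]
  exact (Set.eq_of_subset_of_ncard_le (Set.subset_univ _) hcard.ge).superset (Set.mem_univ f)

lemma exists_color_ne (hC : IsAttachedClique G k C t) (hc : IsProperColoring G k c) (f : Fin k) :
    ∃ w ∈ C, c (t w) ≠ f := by
  obtain ⟨w, hw, rfl⟩ := hC.exists_color_eq hc f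
  exact ⟨w, hw, (hc (hC.adj hw)).symm⟩

lemma kempeEquiv_comp_swap [Finite V] (hC : IsAttachedClique G k C t)
    (hc : IsProperColoring G k c) (hy : y ∈ C) (hz : z ∈ C) (hyz : c y ≠ c (t z))
    (hzy : c z ≠ c (t y)) : KempeEquiv G k c (c ∘ Equiv.swap y z) := by
  have hcomp : c ∘ Equiv.swap y z = kempeSwap (c y) (c z) {y, z} c := by
    funext x
    by_cases hx : x ∈ ({y, z} : Set V)
    · rw [kempeSwap_of_mem hx]
      obtain rfl | rfl := hx <;> simp
    · rw [kempeSwap_of_notMem hx, Function.comp_apply]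
      rw [Set.mem_insert_iff, Set.mem_singleton_iff, not_or] at hx
      rw [Equiv.swap_apply_of_ne_of_ne hx.1 hx.2]
  rw [hcomp]
  refine (kempeClosed_of_forall_mem fun x hx v hv _ hxv => ?_).kempeEquiv
  by_cases hvC : v ∈ C
  · exact hv.imp (fun h => hC.injOn hc hvC hy h) (fun h => hC.injOn hc hvC hz h)
  · have hxC : x ∈ C := by obtain rfl | rfl := hx <;> assumption
    obtain rfl := hC.eq_of_adj hxC hvC hxv
    obtain rfl | rfl := hx <;> obtain hv | hv := hv
    · exact absurd hv.symm (hc hxv)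
    · exact absurd hv.symm hzy
    · exact absurd hv.symm hyz
    · exact absurd hv.symm (hc hxv)

lemma kempeRepeats_of_color_eq [Finite V] (hC : IsAttachedClique G k C t)
    (hc : IsProperColoring G k c) (hi : i ∉ C) (hw : w ∈ C) (hz : z ∈ C) (hwi : c w = c i)
    (hzw : c z ≠ c (t w)) (hiz : c i ≠ c (t z)) : KempeRepeats G C t c i (t z) := by
  refine ⟨_, hC.kempeEquiv_comp_swap hc hw hz (hwi ▸ hiz) hzw, z, hz, rfl, ?_⟩
  have hswap : Equiv.swap w z i = i :=
    Equiv.swap_apply_of_ne_of_ne (ne_of_mem_of_not_mem hw hi).symm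
      (ne_of_mem_of_not_mem hz hi).symm
  rw [Function.comp_apply, Function.comp_apply, Equiv.swap_apply_right, hswap, hwi]

lemma kempeRepeats_of_eq [Finite V] (hC : IsAttachedClique G k C t)
    (hc : IsProperColoring G k c) (hi : i ∉ C) (hy : y ∈ C) (hz : z ∈ C) (hne : y ≠ z)
    (hyz : t y = t z) (hiy : c i ≠ c (t y)) : KempeRepeats G C t c i (t y) := by
  obtain ⟨w, hw, hwi⟩ := hC.exists_color_eq hc (c i)
  by_cases hyw : c y = c (t w)
  · have hzw : c z ≠ c (t w) := hyw ▸ (hC.injOn hc).ne hz hy hne.symm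
    rw [hyz] at hiy ⊢
    exact hC.kempeRepeats_of_color_eq hc hi hw hz hwi hzw hiy
  · exact hC.kempeRepeats_of_color_eq hc hi hw hy hwi hyw hiy

lemma kempeRepeats_of_forall_mem_bicolored [Finite V] (hC : IsAttachedClique G k C t)
    (hc : IsProperColoring G k c) (hi : i ∉ C) (hz : z ∈ C)
    (h : ∀ x ∈ C, t x ∈ bicolored c (c i) (c (t z))) : KempeRepeats G C t c i (t z) := by
  obtain ⟨w, hw, hwi⟩ := hC.exists_color_eq hc (c i)
  have hiw : c i ≠ c (t w) := hwi ▸ hc (hC.adj hw)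
  have htw : c (t w) = c (t z) := (h w hw).resolve_left hiw.symm
  exact hC.kempeRepeats_of_color_eq hc hi hw hz hwi (htw ▸ hc (hC.adj hz)) (htw ▸ hiw)

end IsAttachedClique

lemma KempeRepeats.kempeEquiv [Finite V] (hC : IsAttachedClique G k C t)
    (hconn : ∀ u v, (G.induce {u, v}ᶜ).Preconnected) (hdeg : ∀ x, (G.neighborSet x).ncard ≤ k)
    (hc : IsProperColoring G k c) (hc' : IsProperColoring G k c') (hw : w ∈ C)
    (h : KempeRepeats G C t c (t w) j) (h' : KempeRepeats G C t c' (t w) j) :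
    KempeEquiv G k c c' := by
  obtain ⟨d, hd, y, hy, rfl, hyw⟩ := h
  obtain ⟨d', hd', z, hz, hzy, hzw⟩ := h'
  have hpd := hc.of_kempeEquiv hd
  have hpd' := hc'.of_kempeEquiv hd'
  have hswap : KempeEquiv G k d' (d' ∘ Equiv.swap y z) :=
    hC.kempeEquiv_comp_swap hpd' hy hz (hzy ▸ hpd' (hC.adj hy)) (hzy ▸ hpd' (hC.adj hz))
  have hne : ∀ x ∈ C, t w ≠ x := fun x hx => (ne_of_mem_of_not_mem hx (hC.notMem hw)).symm
  have hrepeat : (d' ∘ Equiv.swap y z) (t w) = (d' ∘ Equiv.swap y z) y := by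
    rw [Function.comp_apply, Function.comp_apply, Equiv.swap_apply_left,
      Equiv.swap_apply_of_ne_of_ne (hne y hy) (hne z hz), hzw]
  have hwy : w ≠ y := by
    rintro rfl
    exact hpd (hC.adj hw) hyw
  have hdd' : KempeEquiv G k d (d' ∘ Equiv.swap y z) :=
    kempeEquiv_of_eq_of_eq (hne y hy) (hconn _ _) (fun x _ => hdeg x) (hC.adj hw)
      (hC.isClique hw hy hwy) hpd (hpd'.of_kempeEquiv hswap) hyw.symm hrepeat
  have hback : KempeEquiv G k (d' ∘ Equiv.swap y z) c' := KempeEquiv.symm (hd'.trans hswap)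
  exact (hd.trans hdd').trans hback

/-- Of the three vertices outside `C` with a neighbour in `C`, one, say `t y`, is attached to two
vertices of `C`. Every colouring then satisfies `KempeRepeats` for two of the pairs `(t p, t y)`,
`(t q, t y)` and `(t p, t q)`, so any two colourings have a pair in common. -/
theorem IsAttachedClique.kempeClass [Finite V] (hC : IsAttachedClique G k C t) (hk : 3 < k)
    (ht : (t '' C).ncard = 3) (hconn : ∀ u v, (G.induce {u, v}ᶜ).Preconnected)
    (hdeg : ∀ x, (G.neighborSet x).ncard ≤ k) : KempeClass G k := by
  obtain ⟨y, hy, z, hz, hne, hyz, p, hp, q, hq, himage⟩ :=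
    exists_ne_of_ncard_image_eq_three ht (hC.ncard_eq.symm ▸ hk)
  have hdouble : ∀ c, IsProperColoring G k c → ∀ x ∈ C, c (t x) ≠ c (t y) →
      KempeRepeats G C t c (t x) (t y) := fun c hc x hx h =>
    hC.kempeRepeats_of_eq hc (hC.notMem hx) hy hz hne hyz h
  have htwo : ∀ c, IsProperColoring G k c → c (t p) = c (t y) ∨ c (t q) = c (t y) →
      KempeRepeats G C t c (t p) (t q) := fun c hc h =>
    hC.kempeRepeats_of_forall_mem_bicolored hc (hC.notMem hp) hq fun x hx => by
      rw [mem_bicolored]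
      grind
  have hcolors : ∀ c, IsProperColoring G k c → c (t p) ≠ c (t y) ∨ c (t q) ≠ c (t y) := by
    intro c hc
    obtain ⟨x, hx, hxy⟩ := hC.exists_color_ne hc (c (t y))
    grind
  intro c c' hc hc'
  have hequiv : ∀ {w j}, w ∈ C → KempeRepeats G C t c (t w) j → KempeRepeats G C t c' (t w) j →
      KempeEquiv G k c c' := KempeRepeats.kempeEquiv hC hconn hdeg hc hc'
  by_cases hcp : c (t p) ≠ c (t y) ∧ c' (t p) ≠ c' (t y)
  · exact hequiv hp (hdouble c hc p hp hcp.1) (hdouble c' hc' p hp hcp.2)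
  by_cases hcq : c (t q) ≠ c (t y) ∧ c' (t q) ≠ c' (t y)
  · exact hequiv hq (hdouble c hc q hq hcq.1) (hdouble c' hc' q hq hcq.2)
  · have hboth : (c (t p) = c (t y) ∨ c (t q) = c (t y)) ∧
        (c' (t p) = c' (t y) ∨ c' (t q) = c' (t y)) := by
      have := hcolors c hc
      have := hcolors c' hc'
      tauto
    exact hequiv hp (htwo c hc hboth.1) (htwo c' hc' hboth.2)

end AttachedClique

theorem stmt9_general {V : Type*} [Fintype V] (k : ℕ) (hk : 4 ≤ k) (G : SimpleGraph V)
    [DecidableRel G.Adj] (hdeg : ∀ v, G.degree v ≤ k) (h3c : ThreeConnected G)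
    (S : Set V) (hScard : S.ncard = 3) (C : Set V) (hCS : C ⊆ Sᶜ)
    (hCcomp : ∀ x ∈ C, ∀ y ∈ Sᶜ, y ∉ C → ¬ G.Adj x y)
    (hCcard : C.ncard = k) (hCclique : ∀ x ∈ C, ∀ y ∈ C, x ≠ y → G.Adj x y) :
    KempeClass G k := by
  have hncard : ∀ v, (G.neighborSet v).ncard = G.degree v := fun v => by
    rw [Set.ncard_eq_toFinset_card', Set.toFinset_card, card_neighborSet_eq_degree]
  have hncard_le : ∀ v, (G.neighborSet v).ncard ≤ k := fun v => (hncard v).trans_le (hdeg v)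
  by_cases hlow : ∃ v, (G.neighborSet v).ncard < k
  · obtain ⟨v, hv⟩ := hlow
    have hconn : (G.induce ∅ᶜ).Preconnected := (h3c.2 ∅ (by simp)).preconnected
    have hdegen : Degenerate G (k - 1) :=
      degenerate_of_preconnected_induce_compl (Set.pairwise_empty _) hconn
        (fun x _ => (hncard_le x).trans (by lia)) (Set.notMem_empty v) (by lia)
    exact hdegen.kempeClass (by lia)
  push Not at hlow
  obtain ⟨t, hC⟩ := exists_isAttachedClique (fun x hx y hy => hCclique x hx y hy) hCcard
    fun y _ => (hncard_le y).antisymm (hlow y)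
  have hne : C.Nonempty := Set.nonempty_of_ncard_ne_zero (by lia)
  have htS : ∀ y ∈ C, t y ∈ S := fun y hy =>
    by_contra fun h => hCcomp y hy (t y) h (hC.notMem hy) (hC.adj hy)
  have himage : t '' C = S := hC.image_eq hne (Set.disjoint_left.2 hCS) htS fun s hs =>
    (h3c.2 _ (by rw [Set.ncard_sdiff_singleton_of_mem hs, hScard])).preconnected
  have hpair : ∀ u v : V, (G.induce {u, v}ᶜ).Preconnected := fun u v =>
    (h3c.2 _ ((Set.ncard_insert_le u {v}).trans (by simp))).preconnected
  exact hC.kempeClass hk (himage ▸ hScard) hpair hncard_le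

/-- for `k ≥ 4`, a `k`-regular 3-connected graph with a vertex cut `S`
of size 3 such that some connected component of `G - S` is a clique on `k` vertices
has all its proper `k`-colourings in a single Kempe class. -/
theorem stmt9 {V : Type*} [Fintype V] (k : ℕ) (hk : 4 ≤ k) (G : SimpleGraph V)
    [DecidableRel G.Adj] (hreg : G.IsRegularOfDegree k) (h3c : ThreeConnected G)
    (S : Set V) (hScard : S.ncard = 3) (hcut : ¬ (G.induce Sᶜ).Connected)
    (C : Set V) (hCS : C ⊆ Sᶜ) (hCconn : (G.induce C).Connected)
    (hCcomp : ∀ x ∈ C, ∀ y ∈ Sᶜ, y ∉ C → ¬ G.Adj x y)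
    (hCcard : C.ncard = k) (hCclique : ∀ x ∈ C, ∀ y ∈ C, x ≠ y → G.Adj x y) :
    KempeClass G k :=
  stmt9_general k hk G (fun v => (hreg v).le) h3c S hScard C hCS hCcomp hCcard hCclique
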